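/- arXiv:1404.0464 — 11 statements merged into one kernel-verified Lean document; each statement's English description precedes it below -/
import Mathlib

section
/- Let A be an associative algebra over a field F, let q₁, q₂, q₃ be nonzero elements of F, and let A, B, C ∈ A. Then the q-Jacobi identity holds: [A,[B,C]_{(q₁,q₁⁻¹)}]_{(q₃q₂⁻¹,q₂q₃⁻¹)} + [B,[C,A]_{(q₂,q₂⁻¹)}]_{(q₁q₃⁻¹,q₃q₁⁻¹)} + [C,[A,B]_{(q₃,q₃⁻¹)}]_{(q₂q₁⁻¹,q₁q₂⁻¹)} = 0. -/
/-- The deformed commutator `[x,y]_{(u,v)} = u • (x*y) - v • (y*x)`. -/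
def dcomm {F 𝔸 : Type*} [CommSemiring F] [Ring 𝔸] [Algebra F 𝔸] (u v : F) (x y : 𝔸) : 𝔸 :=
  u • (x * y) - v • (y * x)

/-- the q-Jacobi identity for the deformed commutator in an associative
algebra over a field. -/
theorem stmt0 {F 𝔸 : Type*} [Field F] [Ring 𝔸] [Algebra F 𝔸]
    (q₁ q₂ q₃ : F) (h₁ : q₁ ≠ 0) (h₂ : q₂ ≠ 0) (h₃ : q₃ ≠ 0) (A B C : 𝔸) :
    dcomm (q₃ * q₂⁻¹) (q₂ * q₃⁻¹) A (dcomm q₁ q₁⁻¹ B C)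
      + dcomm (q₁ * q₃⁻¹) (q₃ * q₁⁻¹) B (dcomm q₂ q₂⁻¹ C A)
      + dcomm (q₂ * q₁⁻¹) (q₁ * q₂⁻¹) C (dcomm q₃ q₃⁻¹ A B) = 0 := by
  simp only [dcomm, mul_sub, sub_mul, smul_sub, mul_smul_comm, smul_mul_assoc, smul_smul, mul_assoc]
  module
end

section
/- For all m, n ∈ ℤ, the operators L_m satisfy the q-deformed Virasoro–Witt algebra relation: q^{m−n}·(L_m ∘ L_n) − q^{n−m}·(L_n ∘ L_m) = [m−n]·L_{m+n} as ℂ-linear operators on V. -/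
open scoped BigOperators

/-- The q-number `[x] = (q^x - q^{-x})/(q - q⁻¹)`. -/
noncomputable def qnum (q : ℂ) (x : ℤ) : ℂ := (q ^ x - q ^ (-x)) / (q - q⁻¹)

/-- The operator `L_m = -q^N (a†)^{m+1} a` on `V = ℤ →₀ ℂ`,
determined by `L_m e_k = -[k] q^{k+m} e_{k+m}`. -/
noncomputable def Lop (q : ℂ) (m : ℤ) : Module.End ℂ (ℤ →₀ ℂ) :=
  Finsupp.lsum ℂ fun k : ℤ => (-(qnum q k) * q ^ (k + m)) • Finsupp.lsingle (k + m)

/-- the q-deformed Virasoro–Witt algebra relation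
`q^{m-n} L_m L_n - q^{n-m} L_n L_m = [m-n] L_{m+n}`. -/
theorem stmt1 (q : ℂ) (hq : q ≠ 0) (hq2 : q ^ 2 ≠ 1) (m n : ℤ) :
    q ^ (m - n) • (Lop q m * Lop q n) - q ^ (n - m) • (Lop q n * Lop q m)
      = qnum q (m - n) • Lop q (m + n) := by
  have hd : q - q⁻¹ ≠ 0 := by
    intro h
    apply hq2
    have h1 : q = q⁻¹ := sub_eq_zero.mp h
    calc q ^ 2 = q * q := sq q
      _ = q * q⁻¹ := by rw [← h1]
      _ = 1 := mul_inv_cancel₀ hq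
  have hL : ∀ (m k : ℤ) (c : ℂ), Lop q m (Finsupp.single k c)
      = Finsupp.single (k + m) (-(qnum q k) * q ^ (k + m) * c) := by
    intro m k c
    simp [Lop]
  apply Finsupp.lhom_ext
  intro k c
  simp only [LinearMap.sub_apply, LinearMap.smul_apply, Module.End.mul_apply, hL,
    Finsupp.smul_single, smul_eq_mul]
  rw [show k + n + m = k + (m + n) by ring, show k + m + n = k + (m + n) by ring,
    ← Finsupp.single_sub]
  congr 1
  simp only [qnum, zpow_add₀ hq, zpow_sub₀ hq, zpow_neg]
  have h1 := zpow_ne_zero m hq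
  have h2 := zpow_ne_zero n hq
  have h3 := zpow_ne_zero k hq
  generalize q ^ m = x at *
  generalize q ^ n = y at *
  generalize q ^ k = z at *
  generalize q - q⁻¹ = d at *
  field_simp
  ring
end

section
/- Define g : ℤ³ → ℂ by g(a,b,c) = (q − q^{-1})·[a−b]·[a−c]·[b−c]. Then for all x₁, x₂, x₃, x₄, x₅ ∈ ℤ, the fully antisymmetrized sh-Jacobi sum vanishes: Σ_{σ∈S₅} sgn(σ)·g(x_{σ(1)},x_{σ(2)},x_{σ(3)})·g(x_{σ(1)}+x_{σ(2)}+x_{σ(3)}, x_{σ(4)}, x_{σ(5)}) = 0. Consequently the trilinear bracket ⟦L_a,L_b,L_c⟧ = g(a,b,c)·L_{a+b+c} on the free ℂ-module with basis (L_i)_{i∈ℤ} (the q-deformed Virasoro–Witt 3-algebra) satisfies the sh-Jacobi identity, i.e. it is a sh-3-Lie algebra. -/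
/-- The structure constant `g(a,b,c) = (q - q⁻¹)·[a-b]·[a-c]·[b-c]` of the
q-deformed Virasoro–Witt 3-algebra. -/
noncomputable def gVW (q : ℂ) (a b c : ℤ) : ℂ :=
  (q - q⁻¹) * qnum q (a - b) * qnum q (a - c) * qnum q (b - c)

/-- The trilinear bracket `⟦L_a,L_b,L_c⟧ = g(a,b,c)·L_{a+b+c}` on the free ℂ-module
`ℤ →₀ ℂ` with basis `L_i = single i 1`, extended trilinearly. -/
noncomputable def VWbr (q : ℂ) (f g h : ℤ →₀ ℂ) : ℤ →₀ ℂ :=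
  f.sum fun a ca => g.sum fun b cb => h.sum fun c cc =>
    (ca * cb * cc * gVW q a b c) • Finsupp.single (a + b + c) (1 : ℂ)


open Equiv in
/-- An antisymmetrized monomial with a repeated exponent vanishes. -/
lemma alt_monomial (u : Fin 5 → ℂ) (m : Fin 5 → ℕ) (hm : ¬ Function.Injective m) :
    ∑ σ : Perm (Fin 5), ((Perm.sign σ : ℤ) : ℂ) *
      (u (σ 0) ^ m 0 * u (σ 1) ^ m 1 * u (σ 2) ^ m 2 * u (σ 3) ^ m 3 * u (σ 4) ^ m 4) = 0 := by
  have hdet : (Matrix.of fun i j : Fin 5 => u i ^ m j).det = 0 := by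
    simp only [Function.Injective, not_forall] at hm
    obtain ⟨i, j, hij, hne⟩ := hm
    exact Matrix.det_zero_of_column_eq hne (fun k => by simp [hij])
  rw [Matrix.det_apply'] at hdet
  simpa [Fin.prod_univ_five] using hdet

open Equiv in
/-- The antisymmetrized sum of the numerators, in the variables `u i = q ^ (2 x i)`. -/
lemma alt_poly (u : Fin 5 → ℂ) (s t : ℂ) :
    ∑ σ : Perm (Fin 5), ((Perm.sign σ : ℤ) : ℂ) *
      ((u (σ 0) - u (σ 1)) * (u (σ 0) - u (σ 2)) * (u (σ 1) - u (σ 2)) * (u (σ 3) - u (σ 4)) *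
        (s * (u (σ 0) * u (σ 1) * u (σ 2)) - s * (u (σ 3) + u (σ 4))
          + t * (u (σ 3) * u (σ 4)) ^ 2)) = 0 := by
  have A := fun (a b c d e : ℕ) (h : ¬ Function.Injective ![a, b, c, d, e]) =>
    alt_monomial u ![a, b, c, d, e] h
  have h := fun (k : ℂ) (a b c d e : ℕ) (h : ¬ Function.Injective ![a, b, c, d, e]) =>
    congrArg (fun z => k * z) (A a b c d e h)
  simp only [Finset.mul_sum, mul_zero] at h
  have h0 := h (s) 3 2 1 1 0 (by decide)
  have h1 := h (-s) 2 1 0 2 0 (by decide)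
  have h2 := h (-s) 3 2 1 0 1 (by decide)
  have h3 := h (s) 2 1 0 0 2 (by decide)
  have h4 := h (-s) 3 1 2 1 0 (by decide)
  have h5 := h (s) 2 0 1 2 0 (by decide)
  have h6 := h (s) 3 1 2 0 1 (by decide)
  have h7 := h (-s) 2 0 1 0 2 (by decide)
  have h8 := h (s) 2 1 3 1 0 (by decide)
  have h9 := h (-s) 1 0 2 2 0 (by decide)
  have h10 := h (-s) 2 1 3 0 1 (by decide)
  have h11 := h (s) 1 0 2 0 2 (by decide)
  have h12 := h (-s) 2 3 1 1 0 (by decide)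
  have h13 := h (s) 1 2 0 2 0 (by decide)
  have h14 := h (s) 2 3 1 0 1 (by decide)
  have h15 := h (-s) 1 2 0 0 2 (by decide)
  have h16 := h (s) 1 3 2 1 0 (by decide)
  have h17 := h (-s) 0 2 1 2 0 (by decide)
  have h18 := h (-s) 1 3 2 0 1 (by decide)
  have h19 := h (s) 0 2 1 0 2 (by decide)
  have h20 := h (-s) 1 2 3 1 0 (by decide)
  have h21 := h (s) 0 1 2 2 0 (by decide)
  have h22 := h (s) 1 2 3 0 1 (by decide)
  have h23 := h (-s) 0 1 2 0 2 (by decide)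
  have h24 := h (t) 2 1 0 3 2 (by decide)
  have h25 := h (-t) 2 1 0 2 3 (by decide)
  have h26 := h (-t) 2 0 1 3 2 (by decide)
  have h27 := h (t) 2 0 1 2 3 (by decide)
  have h28 := h (t) 1 0 2 3 2 (by decide)
  have h29 := h (-t) 1 0 2 2 3 (by decide)
  have h30 := h (-t) 1 2 0 3 2 (by decide)
  have h31 := h (t) 1 2 0 2 3 (by decide)
  have h32 := h (t) 0 2 1 3 2 (by decide)
  have h33 := h (-t) 0 2 1 2 3 (by decide)
  have h34 := h (-t) 0 1 2 3 2 (by decide)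
  have h35 := h (t) 0 1 2 2 3 (by decide)
  have z := (congrArg₂ (· + ·) (congrArg₂ (· + ·) (congrArg₂ (· + ·) (congrArg₂ (· + ·) (congrArg₂ (· + ·) (congrArg₂ (· + ·) (congrArg₂ (· + ·) (congrArg₂ (· + ·) (congrArg₂ (· + ·) (congrArg₂ (· + ·) (congrArg₂ (· + ·) (congrArg₂ (· + ·) (congrArg₂ (· + ·) (congrArg₂ (· + ·) (congrArg₂ (· + ·) (congrArg₂ (· + ·) (congrArg₂ (· + ·) (congrArg₂ (· + ·) (congrArg₂ (· + ·) (congrArg₂ (· + ·) (congrArg₂ (· + ·) (congrArg₂ (· + ·) (congrArg₂ (· + ·) (congrArg₂ (· + ·) (congrArg₂ (· + ·) (congrArg₂ (· + ·) (congrArg₂ (· + ·) (congrArg₂ (· + ·) (congrArg₂ (· + ·) (congrArg₂ (· + ·) (congrArg₂ (· + ·) (congrArg₂ (· + ·) (congrArg₂ (· + ·) (congrArg₂ (· + ·) (congrArg₂ (· + ·) h0 h1) h2) h3) h4) h5) h6) h7) h8) h9) h10) h11) h12) h13) h14) h15) h16) h17) h18) h19) h20) h21) h22) h23) h24) h25)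 h26) h27) h28) h29) h30) h31) h32) h33) h34) h35)
  simp only [add_zero, ← Finset.sum_add_distrib] at z
  rw [← z]
  refine Finset.sum_congr rfl fun σ _ => ?_
  simp
  ring

lemma gVW_eq (q : ℂ) (hq : q ≠ 0) (hq2 : q ^ 2 ≠ 1) (a b c : ℤ) :
    gVW q a b c = ((q - q⁻¹) ^ 2)⁻¹ * (((q ^ a) ^ 2 - (q ^ b) ^ 2) * ((q ^ a) ^ 2 - (q ^ c) ^ 2)
      * ((q ^ b) ^ 2 - (q ^ c) ^ 2) / (q ^ a * q ^ b * q ^ c) ^ 2) := by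
  have hd : q - q⁻¹ ≠ 0 := by
    intro h
    apply hq2
    field_simp at h
    linear_combination h
  have ha := zpow_ne_zero a hq
  have hb := zpow_ne_zero b hq
  have hc := zpow_ne_zero c hq
  unfold gVW qnum
  simp only [neg_sub, zpow_sub₀ hq]
  generalize q ^ a = A at *
  generalize q ^ b = B at *
  generalize q ^ c = C at *
  generalize q - q⁻¹ = d at *
  field_simp

open Equiv in
lemma jacobi_scalar (q : ℂ) (hq : q ≠ 0) (hq2 : q ^ 2 ≠ 1) (x : Fin 5 → ℤ) :
    ∑ σ : Perm (Fin 5), ((Perm.sign σ : ℤ) : ℂ) *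
      (gVW q (x (σ 0)) (x (σ 1)) (x (σ 2)) *
        gVW q (x (σ 0) + x (σ 1) + x (σ 2)) (x (σ 3)) (x (σ 4))) = 0 := by
  set E : ℂ := ∏ i, (q ^ x i) ^ 2 with hE
  set k : ℂ := ((q - q⁻¹) ^ 2)⁻¹ with hk
  rw [← alt_poly (fun i => (q ^ x i) ^ 2) (k ^ 2 * E⁻¹) (k ^ 2 * (E⁻¹) ^ 2)]
  refine Finset.sum_congr rfl fun σ _ => ?_
  have hEσ : E = (q ^ x (σ 0)) ^ 2 * (q ^ x (σ 1)) ^ 2 * (q ^ x (σ 2)) ^ 2 * (q ^ x (σ 3)) ^ 2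
      * (q ^ x (σ 4)) ^ 2 := by
    rw [hE, ← Equiv.prod_comp σ, Fin.prod_univ_five]
  rw [gVW_eq q hq hq2, gVW_eq q hq hq2, ← hk, hEσ, zpow_add₀ hq, zpow_add₀ hq]
  have h0 := zpow_ne_zero (x (σ 0)) hq
  have h1 := zpow_ne_zero (x (σ 1)) hq
  have h2 := zpow_ne_zero (x (σ 2)) hq
  have h3 := zpow_ne_zero (x (σ 3)) hq
  have h4 := zpow_ne_zero (x (σ 4)) hq
  clear_value k
  generalize q ^ x (σ 0) = a at *
  generalize q ^ x (σ 1) = b at *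
  generalize q ^ x (σ 2) = c at *
  generalize q ^ x (σ 3) = d at *
  generalize q ^ x (σ 4) = e at *
  congr 1
  field_simp
  ring

/-- The bracket as a trilinear map. -/
noncomputable def VWlin (q : ℂ) : (ℤ →₀ ℂ) →ₗ[ℂ] (ℤ →₀ ℂ) →ₗ[ℂ] (ℤ →₀ ℂ) →ₗ[ℂ] (ℤ →₀ ℂ) :=
  Finsupp.linearCombination ℂ fun a => Finsupp.linearCombination ℂ fun b =>
    Finsupp.linearCombination ℂ fun c => gVW q a b c • Finsupp.single (a + b + c) (1 : ℂ)

lemma VWbr_eq (q : ℂ) (f g h : ℤ →₀ ℂ) : VWbr q f g h = VWlin q f g h := by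
  simp only [VWbr, VWlin, Finsupp.linearCombination_apply, Finsupp.sum, LinearMap.sum_apply,
    LinearMap.smul_apply, Finset.smul_sum, smul_smul, mul_assoc]

lemma VWlin_single (q : ℂ) (a b c : ℤ) :
    VWlin q (Finsupp.single a 1) (Finsupp.single b 1) (Finsupp.single c 1)
      = gVW q a b c • Finsupp.single (a + b + c) (1 : ℂ) := by
  simp [VWlin]

/-- The iterated bracket as a multilinear map. -/
noncomputable def VWmul (q : ℂ) : MultilinearMap ℂ (fun _ : Fin 5 => (ℤ →₀ ℂ)) (ℤ →₀ ℂ) :=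
  MultilinearMap.mk' (fun v => VWlin q (VWlin q (v 0) (v 1) (v 2)) (v 3) (v 4))
    (by
      intro v i x y
      fin_cases i <;> simp [Function.update])
    (by
      intro v i c x
      fin_cases i <;> simp [Function.update])

open Equiv in
lemma jacobi_mul (q : ℂ) (hq : q ≠ 0) (hq2 : q ^ 2 ≠ 1) :
    ∑ σ : Perm (Fin 5), (Perm.sign σ : ℤ) • (VWmul q).domDomCongr σ = 0 := by
  refine Module.Basis.ext_multilinear
    (fun _ => (Finsupp.basisSingleOne : Module.Basis ℤ ℂ (ℤ →₀ ℂ))) fun x => ?_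
  have key : ∀ σ : Perm (Fin 5), ((Perm.sign σ : ℤ) • (VWmul q).domDomCongr σ)
      (fun i => (Finsupp.basisSingleOne : Module.Basis ℤ ℂ (ℤ →₀ ℂ)) (x i)) =
      (((Perm.sign σ : ℤ) : ℂ) *
      (gVW q (x (σ 0)) (x (σ 1)) (x (σ 2)) *
        gVW q (x (σ 0) + x (σ 1) + x (σ 2)) (x (σ 3)) (x (σ 4)))) •
        Finsupp.single (∑ i, x i) (1 : ℂ) := by
    intro σ
    have hs : ∑ i, x i = x (σ 0) + x (σ 1) + x (σ 2) + x (σ 3) + x (σ 4) := by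
      rw [← Equiv.sum_comp σ, Fin.sum_univ_five]
    rw [MultilinearMap.smul_apply, MultilinearMap.domDomCongr_apply, hs]
    simp only [VWmul, MultilinearMap.mk', MultilinearMap.coe_mk, Finsupp.coe_basisSingleOne,
      VWlin_single, map_smul, LinearMap.smul_apply, ← Int.cast_smul_eq_zsmul ℂ, smul_smul]
  rw [MultilinearMap.sum_apply, Finset.sum_congr rfl fun σ _ => key σ, ← Finset.sum_smul,
    jacobi_scalar q hq hq2 x, zero_smul]
  rfl

/-- the fully antisymmetrized sh-Jacobi sum of the structure constants
vanishes, and consequently the q-deformed Virasoro–Witt 3-algebra satisfies the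
sh-Jacobi identity, i.e. it is a sh-3-Lie algebra. -/
theorem stmt4 (q : ℂ) (hq : q ≠ 0) (hq2 : q ^ 2 ≠ 1) :
    (∀ x : Fin 5 → ℤ,
      ∑ σ : Equiv.Perm (Fin 5), ((Equiv.Perm.sign σ : ℤ) : ℂ) *
        (gVW q (x (σ 0)) (x (σ 1)) (x (σ 2)) *
          gVW q (x (σ 0) + x (σ 1) + x (σ 2)) (x (σ 3)) (x (σ 4))) = 0) ∧
    (∀ v : Fin 5 → (ℤ →₀ ℂ),
      ∑ σ : Equiv.Perm (Fin 5), (Equiv.Perm.sign σ : ℤ) •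
        VWbr q (VWbr q (v (σ 0)) (v (σ 1)) (v (σ 2))) (v (σ 3)) (v (σ 4)) = 0) := by
  refine ⟨jacobi_scalar q hq hq2, fun v => ?_⟩
  have h := congrArg (fun F => F v) (jacobi_mul q hq hq2)
  simp only [MultilinearMap.sum_apply, MultilinearMap.smul_apply,
    MultilinearMap.domDomCongr_apply, MultilinearMap.zero_apply] at h
  rw [← h]
  refine Finset.sum_congr rfl fun σ _ => ?_
  rw [VWbr_eq, VWbr_eq]
  rfl
end

section
/- For every n ≥ 3 and all i₁,…,i_n ∈ ℤ, define the q-n-bracket of the operators L recursively by ⟦L_i,L_j⟧ = q^{i−j}·L_i∘L_j − q^{j−i}·L_j∘L_i and, for 3 ≤ m ≤ n, ⟦L_{i₁},…,L_{i_m}⟧ = Σ_{s=1}^{m}(−1)^{s+1}·q^{x_m·i_s + y_m·(Σ_{t≠s} i_t)}·L_{i_s}∘⟦L_{i₁},…,L̂_{i_s},…,L_{i_m}⟧ (hat = omission), where (x₃,y₃) = (2,−1), (x_m,y_m) = (m,0) for even m ≥ 4, and (x_m,y_m) = (m−1,−2) for odd m ≥ 5. Then ⟦L_{i₁},…,L_{i_n}⟧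 = f_n(i₁,…,i_n)·L_{i₁+⋯+i_n} as ℂ-linear operators on V. -/
/-- The exponent `x_m` in the star product: `x₃ = 2`, `x_m = m` for even `m ≥ 4`,
`x_m = m - 1` for odd `m ≥ 5`. -/
def qxm (m : ℕ) : ℤ := if m = 3 then 2 else if m % 2 = 0 then (m : ℤ) else (m : ℤ) - 1

/-- The exponent `y_m` in the star product: `y₃ = -1`, `y_m = 0` for even `m ≥ 4`,
`y_m = -2` for odd `m ≥ 5`. -/
def qym (m : ℕ) : ℤ := if m = 3 then -1 else if m % 2 = 0 then 0 else -2

/-- The recursively defined q-n-bracket of the operators `L` (with fuel parameter):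
`⟦L_i,L_j⟧ = q^{i-j} L_i∘L_j - q^{j-i} L_j∘L_i` and, for `m ≥ 3`,
`⟦L_{i₁},…,L_{i_m}⟧ = Σ_s (-1)^{s+1} q^{x_m i_s + y_m (Σ_{t≠s} i_t)} L_{i_s} ∘ ⟦…omit s…⟧`. -/
noncomputable def qnbrAux (q : ℂ) : ℕ → List ℤ → Module.End ℂ (ℤ →₀ ℂ)
  | 0, _ => 0
  | _ + 1, [] => 0
  | _ + 1, [i] => Lop q i
  | _ + 1, [i, j] => q ^ (i - j) • (Lop q i * Lop q j) - q ^ (j - i) • (Lop q j * Lop q i)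
  | fuel + 1, l => ∑ s ∈ Finset.range l.length,
      ((-1 : ℂ) ^ s *
        q ^ (qxm l.length * l.getD s 0 + qym l.length * (l.sum - l.getD s 0))) •
        (Lop q (l.getD s 0) * qnbrAux q fuel (l.eraseIdx s))

/-- The q-n-bracket `⟦L_{i₁},…,L_{i_n}⟧`. -/
noncomputable def qnbr (q : ℂ) (l : List ℤ) : Module.End ℂ (ℤ →₀ ℂ) := qnbrAux q l.length l

/-- The structure constants `f_n(i₁,…,i_n) = s(n)·(q-q⁻¹)^{-(n-1)}·det M`,
`M_{r,j} = q^{2(r - ⌊(n-1)/2⌋) i_j}`. -/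
noncomputable def fVW (q : ℂ) (n : ℕ) (i : Fin n → ℤ) : ℂ :=
  (if n % 4 = 0 ∨ n % 4 = 1 then (1 : ℂ) else -1) * (q - q⁻¹) ^ (1 - (n : ℤ)) *
    Matrix.det (Matrix.of fun r j : Fin n =>
      q ^ (2 * ((r : ℤ) - (((n - 1) / 2 : ℕ) : ℤ)) * i j))

/-- auxiliary operator -/
noncomputable def Mop (q : ℂ) (m : ℤ) : Module.End ℂ (ℤ →₀ ℂ) :=
  Finsupp.lsum ℂ fun k : ℤ =>
    (q ^ (2 * k) * (q ^ (2 * k) - 1) / (q - q⁻¹) ^ 2 * q ^ m) • Finsupp.lsingle (k + m)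

/-- auxiliary determinant -/
noncomputable def Dd (q : ℂ) (n : ℕ) (a : ℤ) (i : Fin n → ℤ) : ℂ :=
  Matrix.det (Matrix.of fun r j : Fin n => q ^ ((2 * (r : ℤ) + a) * i j))

lemma Lop_single (q : ℂ) (m k : ℤ) (c : ℂ) :
    Lop q m (Finsupp.single k c) = Finsupp.single (k + m) (-(qnum q k) * q ^ (k + m) * c) := by
  simp [Lop]

lemma Mop_single (q : ℂ) (m k : ℤ) (c : ℂ) :
    Mop q m (Finsupp.single k c) = Finsupp.single (k + m)
      (q ^ (2 * k) * (q ^ (2 * k) - 1) / (q - q⁻¹) ^ 2 * q ^ m * c) := by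
  simp [Mop]

lemma d_ne (q : ℂ) (hq : q ≠ 0) (hq2 : q ^ 2 ≠ 1) : q - q⁻¹ ≠ 0 := by
  intro h
  apply hq2
  field_simp at h
  linear_combination h

lemma Lop_mul (q : ℂ) (hq : q ≠ 0) (hq2 : q ^ 2 ≠ 1) (i j : ℤ) :
    Lop q i * Lop q j = q ^ (2 * j) • Mop q (i + j) + (q - q⁻¹)⁻¹ • Lop q (i + j) := by
  have hd := d_ne q hq hq2
  apply Finsupp.lhom_ext
  intro k c
  simp only [Module.End.mul_apply, LinearMap.add_apply, LinearMap.smul_apply, Lop_single,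
    Mop_single, Finsupp.smul_single, smul_eq_mul]
  rw [show k + j + i = k + (i + j) by ring, ← Finsupp.single_add]
  congr 1
  have hk : q ^ k ≠ 0 := zpow_ne_zero _ hq
  have hj : q ^ j ≠ 0 := zpow_ne_zero _ hq
  simp only [qnum, neg_add, zpow_add₀ hq, zpow_neg, two_mul]
  generalize q - q⁻¹ = d at *
  field_simp
  ring

lemma Dd_last (q : ℂ) (m : ℕ) (a : ℤ) (i : Fin (m + 1) → ℤ) :
    ∑ s : Fin (m + 1), (-1 : ℂ) ^ (s : ℕ) * q ^ ((2 * (m : ℤ) + a) * i s) *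
      Dd q m a (fun j => i (s.succAbove j)) = (-1) ^ m * Dd q (m + 1) a i := by
  rw [Dd, Matrix.det_succ_row _ (Fin.last m), Finset.mul_sum]
  refine Finset.sum_congr rfl fun s _ => ?_
  have h1 : ((-1 : ℂ) ^ m) * (-1) ^ m = 1 := by rw [← mul_pow]; simp
  have : Dd q m a (fun j => i (s.succAbove j)) = Matrix.det (Matrix.submatrix
      (Matrix.of fun r j : Fin (m + 1) => q ^ ((2 * (r : ℤ) + a) * i j))
      (Fin.last m).succAbove s.succAbove) := by
    rw [Dd]; congr 1; ext r j; simp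
  rw [this]
  simp only [Matrix.of_apply, Fin.val_last, pow_add]
  linear_combination (-(-1 : ℂ) ^ (s : ℕ) * q ^ ((2 * (m : ℤ) + a) * i s) * Matrix.det (Matrix.submatrix
      (Matrix.of fun r j : Fin (m + 1) => q ^ ((2 * (r : ℤ) + a) * i j))
      (Fin.last m).succAbove s.succAbove)) * h1

lemma Dd_zero (q : ℂ) (m : ℕ) (hm : 1 ≤ m) (a : ℤ) (i : Fin (m + 1) → ℤ) :
    ∑ s : Fin (m + 1), (-1 : ℂ) ^ (s : ℕ) * q ^ ((2 * (m : ℤ) + a - 2) * i s) *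
      Dd q m a (fun j => i (s.succAbove j)) = 0 := by
  let A : Matrix (Fin (m + 1)) (Fin (m + 1)) ℂ := Matrix.of fun r j =>
    q ^ ((2 * (if (r : ℕ) = m then (m : ℤ) - 1 else (r : ℤ)) + a) * i j)
  have h0 : A.det = 0 := by
    refine Matrix.det_zero_of_row_eq (i := Fin.last m) (j := ⟨m - 1, by omega⟩) ?_ ?_
    · intro h; have := congrArg Fin.val h; simp at this; omega
    · ext j
      have : m - 1 ≠ m := by omega
      simp [A, this, Nat.cast_sub hm]
  rw [Matrix.det_succ_row _ (Fin.last m)] at h0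
  have h1 : ((-1 : ℂ) ^ m) * (-1) ^ m = 1 := by rw [← mul_pow]; simp
  rw [← mul_zero ((-1 : ℂ) ^ m), ← h0, Finset.mul_sum]
  refine Finset.sum_congr rfl fun s _ => ?_
  have : Dd q m a (fun j => i (s.succAbove j)) = Matrix.det (Matrix.submatrix
      A (Fin.last m).succAbove s.succAbove) := by
    rw [Dd]; congr 1; ext r j; simp [A, r.2.ne]
  rw [this]
  have h2 : A (Fin.last m) s = q ^ ((2 * (m : ℤ) + a - 2) * i s) := by
    simp only [A, Matrix.of_apply, Fin.val_last, if_true]; congr 1; ring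
  rw [h2]
  simp only [Fin.val_last, pow_add]
  linear_combination (-(-1 : ℂ) ^ (s : ℕ) * q ^ ((2 * (m : ℤ) + a - 2) * i s) *
    Matrix.det (Matrix.submatrix A (Fin.last m).succAbove s.succAbove)) * h1

lemma Dd_shift (q : ℂ) (hq : q ≠ 0) (n : ℕ) (a b : ℤ) (i : Fin n → ℤ) :
    Dd q n (a + b) i = q ^ (b * ∑ j, i j) * Dd q n a i := by
  have h : q ^ (b * ∑ j, i j) = ∏ j, q ^ (b * i j) := by
    rw [Finset.mul_sum]
    induction (Finset.univ : Finset (Fin n)) using Finset.induction_on with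
    | empty => simp
    | insert x s hx ih => rw [Finset.sum_insert hx, Finset.prod_insert hx, zpow_add₀ hq, ih]
  rw [h, Dd, Dd, ← Matrix.det_mul_row]
  congr 1
  ext r j
  simp only [Matrix.of_apply]
  rw [← zpow_add₀ hq]
  congr 1; ring

/-- sign -/
noncomputable def sg (n : ℕ) : ℂ := if n % 4 = 0 ∨ n % 4 = 1 then (1 : ℂ) else -1

lemma sg_succ (m : ℕ) : sg m * (-1) ^ m = sg (m + 1) := by
  obtain ⟨k, r, hr, rfl⟩ : ∃ k r, r < 4 ∧ m = 4 * k + r := ⟨m / 4, m % 4, by omega, by omega⟩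
  have h4 : ((-1 : ℂ)) ^ (4 * k) = 1 := by rw [pow_mul]; norm_num
  rw [pow_add, h4]
  interval_cases r <;> simp [sg, Nat.add_mod, Nat.mul_mod_right]
  norm_num

lemma fVW_eq (q : ℂ) (n : ℕ) (i : Fin n → ℤ) :
    fVW q n i = sg n * (q - q⁻¹) ^ (1 - (n : ℤ)) *
      Dd q n (-2 * (((n - 1) / 2 : ℕ) : ℤ)) i := by
  have h : ∀ r j : Fin n, q ^ (2 * ((r : ℤ) - (((n - 1) / 2 : ℕ) : ℤ)) * i j) =
      q ^ ((2 * (r : ℤ) + -2 * (((n - 1) / 2 : ℕ) : ℤ)) * i j) := by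
    intro r j; congr 1; ring
  simp only [fVW, Dd, sg, h]

lemma eraseIdx_ofFn' (m : ℕ) (i : Fin (m + 1) → ℤ) (s : Fin (m + 1)) :
    (List.ofFn i).eraseIdx s = List.ofFn (fun j => i (s.succAbove j)) := by
  apply List.ext_getElem
  · simp [List.length_eraseIdx]
    omega
  · intro k h1 h2
    simp only [List.getElem_eraseIdx, List.getElem_ofFn]
    simp only [Fin.succAbove, Fin.lt_def, Fin.val_castSucc]
    split_ifs <;> rfl

lemma qnbrAux_succ (q : ℂ) (m : ℕ) (hm : 2 ≤ m) (i : Fin (m + 1) → ℤ) :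
    qnbrAux q (m + 1) (List.ofFn i) = ∑ s : Fin (m + 1), ((-1 : ℂ) ^ (s : ℕ) *
        q ^ (qxm (m + 1) * i s + qym (m + 1) * ((∑ j, i j) - i s))) •
        (Lop q (i s) * qnbrAux q m (List.ofFn (fun j => i (s.succAbove j)))) := by
  obtain ⟨m, rfl⟩ : ∃ k, m = k + 2 := ⟨m - 2, by omega⟩
  have key : ∀ l : List ℤ, 3 ≤ l.length → qnbrAux q (m + 2 + 1) l =
      ∑ s ∈ Finset.range l.length,
      ((-1 : ℂ) ^ s *
        q ^ (qxm l.length * l.getD s 0 + qym l.length * (l.sum - l.getD s 0))) •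
        (Lop q (l.getD s 0) * qnbrAux q (m + 2) (l.eraseIdx s)) := by
    intro l hl
    match l, hl with
    | a :: b :: c :: t, _ => rw [qnbrAux] <;> simp
  rw [key _ (by simp), List.length_ofFn, Finset.sum_range]
  refine Finset.sum_congr rfl fun s _ => ?_
  rw [eraseIdx_ofFn', List.sum_ofFn]
  have : (List.ofFn i).getD s 0 = i s := by
    rw [List.getD_eq_getElem _ _ (by simp; omega), List.getElem_ofFn]
  rw [this]

lemma step (q : ℂ) (hq : q ≠ 0) (hq2 : q ^ 2 ≠ 1) (m : ℕ) (hm : 2 ≤ m) (e : ℤ)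
    (hx : qxm (m + 1) - (qym (m + 1) + e) = 2 * m - 2 * (((m - 1) / 2 : ℕ) : ℤ))
    (hy : -2 * (((m - 1) / 2 : ℕ) : ℤ) + (qym (m + 1) + e) = -2 * ((m / 2 : ℕ) : ℤ))
    (ih : ∀ i : Fin m → ℤ, qnbrAux q m (List.ofFn i) =
      (q ^ (e * ∑ j, i j) * fVW q m i) • Lop q (∑ j, i j))
    (i : Fin (m + 1) → ℤ) :
    qnbrAux q (m + 1) (List.ofFn i) = fVW q (m + 1) i • Lop q (∑ j, i j) := by
  have hd := d_ne q hq hq2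
  rw [qnbrAux_succ q m hm]
  set S := ∑ j, i j with hS
  set x := qxm (m + 1)
  set y := qym (m + 1)
  set a : ℤ := -2 * (((m - 1) / 2 : ℕ) : ℤ) with ha
  have hs : ∀ s : Fin (m + 1), ∑ j, i (s.succAbove j) = S - i s := by
    intro s; rw [hS, Fin.sum_univ_succAbove i s]; ring
  set C : ℂ := sg m * (q - q⁻¹) ^ (1 - (m : ℤ)) * q ^ ((y + e) * S) with hC
  have hterm : ∀ s : Fin (m + 1), ((-1 : ℂ) ^ (s : ℕ) * q ^ (x * i s + y * (S - i s))) •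
        (Lop q (i s) * qnbrAux q m (List.ofFn (fun j => i (s.succAbove j)))) =
      (C * q ^ (2 * S) * ((-1 : ℂ) ^ (s : ℕ) * q ^ ((2 * (m : ℤ) + a - 2) * i s) *
        Dd q m a (fun j => i (s.succAbove j)))) • Mop q S +
      (C * (q - q⁻¹)⁻¹ * ((-1 : ℂ) ^ (s : ℕ) * q ^ ((2 * (m : ℤ) + a) * i s) *
        Dd q m a (fun j => i (s.succAbove j)))) • Lop q S := by
    intro s
    rw [ih, hs, mul_smul_comm, Lop_mul q hq hq2, fVW_eq, ← ha,
      show i s + (S - i s) = S by ring, smul_smul, smul_add, smul_smul, smul_smul]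
    have e1 : q ^ (x * i s + y * (S - i s)) * q ^ (e * (S - i s)) =
        q ^ ((y + e) * S) * q ^ ((2 * (m : ℤ) + a) * i s) := by
      rw [← zpow_add₀ hq, ← zpow_add₀ hq]
      congr 1
      have : 2 * (m : ℤ) + a = x - (y + e) := by rw [hx, ha]; ring
      rw [this]; ring
    have e2 : q ^ ((2 * (m : ℤ) + a) * i s) * q ^ (2 * (S - i s)) =
        q ^ (2 * S) * q ^ ((2 * (m : ℤ) + a - 2) * i s) := by
      rw [← zpow_add₀ hq, ← zpow_add₀ hq]
      congr 1; ring
    generalize Dd q m a (fun j => i (s.succAbove j)) = D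
    generalize (q - q⁻¹) ^ (1 - (m : ℤ)) = d1 at *
    generalize (-1 : ℂ) ^ (s : ℕ) = t
    congr 2
    · rw [hC]
      linear_combination (t * sg m * d1 * D * q ^ (2 * (S - i s))) * e1 +
        (t * sg m * d1 * D * q ^ ((y + e) * S)) * e2
    · rw [hC]
      linear_combination (t * sg m * d1 * D * (q - q⁻¹)⁻¹) * e1
  rw [Finset.sum_congr rfl fun s _ => hterm s, Finset.sum_add_distrib, ← Finset.sum_smul,
    ← Finset.sum_smul, ← Finset.mul_sum, ← Finset.mul_sum, Dd_zero q m (by omega),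
    Dd_last, mul_zero, zero_smul, zero_add]
  congr 1
  rw [fVW_eq, show m + 1 - 1 = m by omega, ← hy, Dd_shift q hq, ← sg_succ, hC, ← hS]
  have : (q - q⁻¹) ^ (1 - ((m + 1 : ℕ) : ℤ)) = (q - q⁻¹) ^ (1 - (m : ℤ)) * (q - q⁻¹)⁻¹ := by
    rw [← zpow_sub_one₀ hd]; congr 1; push_cast; ring
  rw [this]
  ring

lemma smul_cancel_aux {M : Type*} [AddCommGroup M] [Module ℂ M] (x y z : ℂ) (A B : M) :
    x • A + y • B - (x • A + z • B) = (y - z) • B := by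
  module

lemma base2 (q : ℂ) (hq : q ≠ 0) (hq2 : q ^ 2 ≠ 1) (i : Fin 2 → ℤ) :
    qnbrAux q 2 (List.ofFn i) =
      (q ^ ((-1) * ∑ j, i j) * fVW q 2 i) • Lop q (∑ j, i j) := by
  have hd := d_ne q hq hq2
  have h : List.ofFn i = [i 0, i 1] := by simp [List.ofFn_succ]
  rw [h, qnbrAux, Lop_mul q hq hq2, Lop_mul q hq hq2, Fin.sum_univ_two, fVW,
    Matrix.det_fin_two, add_comm (i 1) (i 0)]
  simp only [Matrix.of_apply]
  generalize i 0 = a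
  generalize i 1 = b
  have ha : q ^ a ≠ 0 := zpow_ne_zero _ hq
  have hb : q ^ b ≠ 0 := zpow_ne_zero _ hq
  have e1 : q ^ (a - b) * q ^ (2 * b) = q ^ (b - a) * q ^ (2 * a) := by
    rw [← zpow_add₀ hq, ← zpow_add₀ hq]; congr 1; ring
  rw [smul_add, smul_add, smul_smul, smul_smul, smul_smul, smul_smul, e1]
  refine (smul_cancel_aux (M := Module.End ℂ (ℤ →₀ ℂ)) _ _ _ _ _).trans ?_
  congr 1
  norm_num
  simp only [zpow_sub₀ hq, zpow_add₀ hq, zpow_neg, two_mul]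
  generalize q - q⁻¹ = d at *
  field_simp
  try ring

/-- the q-n-bracket of the operators `L` closes with structure
constants `f_n`: `⟦L_{i₁},…,L_{i_n}⟧ = f_n(i₁,…,i_n) • L_{i₁+⋯+i_n}`. -/
theorem stmt6 (q : ℂ) (hq : q ≠ 0) (hq2 : q ^ 2 ≠ 1) (n : ℕ) (hn : 3 ≤ n)
    (i : Fin n → ℤ) :
    qnbr q (List.ofFn i) = fVW q n i • Lop q (∑ j, i j) := by
  rw [qnbr, List.length_ofFn]
  induction n, hn using Nat.le_induction with
  | base =>
    exact step q hq hq2 2 le_rfl (-1) (by simp [qxm, qym]) (by simp [qym])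
      (base2 q hq hq2) i
  | succ m hm ih =>
    refine step q hq hq2 m (by omega) 0 ?_ ?_ (fun i => by rw [ih i]; simp) i
    · unfold qxm qym; split_ifs <;> push_cast <;> omega
    · unfold qym; split_ifs <;> push_cast <;> omega
end

section
/- For every n ≥ 3 and all k₁,…,k_{2n−1} ∈ ℤ, the fully antisymmetrized sh-Jacobi sum of the q-deformed Virasoro–Witt n-algebra structure constants vanishes: Σ_{σ∈S_{2n−1}} sgn(σ)·f_n(k_{σ(1)},…,k_{σ(n)})·f_n(k_{σ(1)}+⋯+k_{σ(n)}, k_{σ(n+1)},…,k_{σ(2n−1)}) = 0. Consequently the n-linear bracket ⟦L_{i₁},…,L_{i_n}⟧ = f_n(i₁,…,i_n)·L_{i₁+⋯+i_n} on the free ℂ-module with basis (L_i)_{i∈ℤ} satisfies the sh-Jacobi identity, i.e. the q-deformed Virasoro–Witt n-algebra is a sh-n-Lie algebra. -/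
theorem aux_prod_zpow (q : ℂ) (hq : q ≠ 0) {ι : Type*} (s : Finset ι) (f : ι → ℤ) :
    ∏ i ∈ s, q ^ f i = q ^ (∑ i ∈ s, f i) := by
  classical
  induction s using Finset.induction_on with
  | empty => simp
  | insert a s ha ih => rw [Finset.prod_insert ha, Finset.sum_insert ha, ih, zpow_add₀ hq]

theorem aux_sum_split (k N : ℕ) (hN : N = (k + 1) + k) (G : Fin N → ℤ) :
    ∑ p, G p = ∑ j : Fin (k + 1), G (Fin.castLE (by omega) j)
      + ∑ j : Fin k, G ⟨(k + 1) + j, by have := j.isLt; omega⟩ := by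
  subst hN
  rw [Fin.sum_univ_add]
  rfl

theorem aux_vanish (q : ℂ) (hq : q ≠ 0) (N : ℕ) (K E : Fin N → ℤ)
    (p p' : Fin N) (hne : p ≠ p') (hE : E p = E p') :
    ∑ σ : Equiv.Perm (Fin N), ((Equiv.Perm.sign σ : ℤ) : ℂ) *
      q ^ (∑ p, 2 * E p * K (σ p)) = 0 := by
  have h : Matrix.det (Matrix.of fun c p : Fin N => q ^ (2 * E p * K c)) = 0 := by
    apply Matrix.det_zero_of_column_eq hne
    intro c
    simp [hE]
  rw [Matrix.det_apply'] at h
  rw [← h]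
  refine Finset.sum_congr rfl fun σ _ => ?_
  rw [← aux_prod_zpow q hq]
  simp

theorem aux_det (q : ℂ) (hq : q ≠ 0) (n : ℕ) (m : ℤ) (i : Fin n → ℤ) :
    Matrix.det (Matrix.of fun r j : Fin n => q ^ (2 * ((r : ℤ) - m) * i j)) =
    ∑ τ : Equiv.Perm (Fin n), ((Equiv.Perm.sign τ : ℤ) : ℂ) *
      q ^ (∑ j, 2 * (((τ j : Fin n) : ℤ) - m) * i j) := by
  rw [Matrix.det_apply']
  refine Finset.sum_congr rfl fun σ _ => ?_
  rw [← aux_prod_zpow q hq]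
  simp

theorem aux_collide (n m : ℕ) (hm : 1 ≤ m) (hm2 : m + 1 < n) (c : Fin n) :
    ∃ a b : Fin n, b ≠ c ∧ ((a : ℤ) - m) + ((c : ℤ) - m) = (b : ℤ) - m := by
  have hc := c.isLt
  by_cases h : (c : ℕ) + 1 < n
  · refine ⟨⟨m + 1, by omega⟩, ⟨c + 1, h⟩, ?_, ?_⟩
    · intro h; have := congrArg Fin.val h; simp at this
    · push_cast; ring
  · refine ⟨⟨m - 1, by omega⟩, ⟨c - 1, by omega⟩, ?_, ?_⟩
    · intro h; have := congrArg Fin.val h; simp at this; omega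
    · simp only []; omega

theorem aux_term (q : ℂ) (hq : q ≠ 0) (n m : ℕ) (hm : 1 ≤ m) (hm2 : m + 1 < n)
    (K : Fin (2 * n - 1) → ℤ) (τ₁ τ₂ : Equiv.Perm (Fin n)) :
    ∑ σ : Equiv.Perm (Fin (2 * n - 1)), ((Equiv.Perm.sign σ : ℤ) : ℂ) *
      q ^ ((∑ j, 2 * (((τ₁ j : Fin n) : ℤ) - m) * K (σ (Fin.castLE (by omega) j))) +
        ∑ j : Fin n, 2 * (((τ₂ j : Fin n) : ℤ) - m) * (if (j : ℕ) = 0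
          then ∑ t : Fin n, K (σ (Fin.castLE (by omega) t))
          else K (σ ⟨n + (j : ℕ) - 1, by have := j.isLt; omega⟩))) = 0 := by
  obtain ⟨a, b, hbc, hab⟩ := aux_collide n m hm hm2 (τ₂ ⟨0, by omega⟩)
  let E : Fin (2 * n - 1) → ℤ := fun p =>
    if h : (p : ℕ) < n then (((τ₁ ⟨p, h⟩ : Fin n) : ℤ) - m) + (((τ₂ ⟨0, by omega⟩ : Fin n) : ℤ) - m)
    else ((τ₂ ⟨p - n + 1, by have := p.isLt; omega⟩ : Fin n) : ℤ) - m
  have hj : ((τ₂.symm b : Fin n) : ℕ) ≠ 0 := by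
    intro h
    apply hbc
    rw [← τ₂.apply_symm_apply b]
    congr 1
    exact Fin.ext h
  have hjl := (τ₂.symm b).isLt
  have hal := (τ₁.symm a).isLt
  rw [← aux_vanish q hq _ K E (Fin.castLE (by omega) (τ₁.symm a))
    ⟨n + (τ₂.symm b : Fin n) - 1, by omega⟩ ?_ ?_]
  · refine Finset.sum_congr rfl fun σ _ => ?_
    congr 2
    obtain ⟨k, rfl⟩ : ∃ k, n = k + 1 := ⟨n - 1, by omega⟩
    rw [aux_sum_split k _ (by omega) (fun p => 2 * E p * K (σ p)), Fin.sum_univ_succ (n := k)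
      (f := fun j : Fin (k + 1) => 2 * (((τ₂ j : Fin (k + 1)) : ℤ) - m) * (if (j : ℕ) = 0
          then ∑ t : Fin (k + 1), K (σ (Fin.castLE (by omega) t))
          else K (σ ⟨k + 1 + (j : ℕ) - 1, by have := j.isLt; omega⟩))), ← add_assoc]
    congr 1
    · simp only [Fin.val_zero, if_true, Finset.mul_sum]
      rw [← Finset.sum_add_distrib]
      refine Finset.sum_congr rfl fun j _ => ?_
      have hE : E (Fin.castLE (by omega) j) =
          (((τ₁ j : Fin (k + 1)) : ℤ) - m) + (((τ₂ 0 : Fin (k + 1)) : ℤ) - m) := by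
        simp only [E]
        rw [dif_pos (by have := j.isLt; simp only [Fin.val_castLE]; omega)]
        rfl
      rw [hE]; ring
    · refine Finset.sum_congr rfl fun j _ => ?_
      have hE : E ⟨k + 1 + j, by have := j.isLt; omega⟩ = ((τ₂ j.succ : Fin (k + 1)) : ℤ) - m := by
        simp only [E]
        rw [dif_neg (by omega)]
        congr 4
        ext; simp
      rw [hE, if_neg (by simp)]
      rfl
  · intro h
    have := congrArg Fin.val h
    simp at this
    omega
  · simp only [E]
    rw [dif_pos (by simp), dif_neg (by simp; omega)]
    have h1 : τ₁ ⟨(Fin.castLE (by omega : n ≤ 2 * n - 1) (τ₁.symm a)).val, by simp⟩ = a := by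
      simp
    have h2 : ∀ h, τ₂ ⟨n + (τ₂.symm b : Fin n) - 1 - n + 1, h⟩ = b := by
      intro h
      rw [← Equiv.eq_symm_apply]
      ext; simp only []; omega
    rw [h1, h2, hab]

theorem aux_swap (q : ℂ) (hq : q ≠ 0) {S T : Type*} [Fintype S] [Fintype T] (s : S → ℂ)
    (t : T → ℂ) (A B : S → T → ℤ) (C : ℂ)
    (key : ∀ a b, ∑ σ, s σ * q ^ (A σ a + B σ b) = 0) :
    ∑ σ, s σ * ((C * ∑ a, t a * q ^ A σ a) * (C * ∑ b, t b * q ^ B σ b)) = 0 := by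
  have h0 : ∑ a, ∑ b, (C * C * t a * t b) * ∑ σ, s σ * q ^ (A σ a + B σ b) = 0 := by
    simp [key]
  have h1 : ∀ σ, s σ * ((C * ∑ a, t a * q ^ A σ a) * (C * ∑ b, t b * q ^ B σ b)) =
      ∑ a, ∑ b, (C * C * t a * t b) * (s σ * q ^ (A σ a + B σ b)) := by
    intro σ
    have : s σ * ((C * ∑ a, t a * q ^ A σ a) * (C * ∑ b, t b * q ^ B σ b)) =
      (C * C * s σ) * ((∑ a, t a * q ^ A σ a) * (∑ b, t b * q ^ B σ b)) := by ring
    rw [this, Finset.sum_mul_sum, Finset.mul_sum]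
    refine Finset.sum_congr rfl fun a _ => ?_
    rw [Finset.mul_sum]
    refine Finset.sum_congr rfl fun b _ => ?_
    rw [zpow_add₀ hq]; ring
  rw [← h0, Finset.sum_congr rfl fun σ _ => h1 σ, Finset.sum_comm]
  refine Finset.sum_congr rfl fun a _ => ?_
  rw [Finset.sum_comm]
  refine Finset.sum_congr rfl fun b _ => ?_
  rw [Finset.mul_sum]


/-- for every `n ≥ 3` the fully antisymmetrized sh-Jacobi sum of the
structure constants of the q-deformed Virasoro–Witt n-algebra vanishes, i.e. the
q-deformed Virasoro–Witt n-algebra is a sh-n-Lie algebra. -/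
theorem stmt7 (q : ℂ) (hq : q ≠ 0) (hq2 : q ^ 2 ≠ 1) (n : ℕ) (hn : 3 ≤ n)
    (K : Fin (2 * n - 1) → ℤ) :
    ∑ σ : Equiv.Perm (Fin (2 * n - 1)), ((Equiv.Perm.sign σ : ℤ) : ℂ) *
      (fVW q n (fun j => K (σ (Fin.castLE (by omega) j))) *
        fVW q n (fun j => if (j : ℕ) = 0
          then ∑ t : Fin n, K (σ (Fin.castLE (by omega) t))
          else K (σ ⟨n + (j : ℕ) - 1, by have := j.isLt; omega⟩))) = 0 := by
  have key := aux_term q hq n ((n - 1) / 2) (by omega) (by omega) K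
  simp only [fVW, aux_det q hq]
  exact aux_swap q hq _ _ _ _ _ key
end

section
/- For every n ≥ 2 and all i₁,…,i_n ∈ ℤ², the n-bracket of the generators T closes: [T_{i₁},…,T_{i_n}] = (Σ_{σ∈S_n} sgn(σ)·p^{Σ_{1≤s<k≤n} i_{σ(k)}∧i_{σ(s)}})·T_{i₁+⋯+i_n}. -/
/-- The wedge `m∧n = m₁n₂ - m₂n₁` on ℤ². -/
def wedge (m n : ℤ × ℤ) : ℤ := m.1 * n.2 - m.2 * n.1

/-- The recursively defined n-bracket in an associative ring (with fuel parameter):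
`[A₁] = A₁` and `[A₁,…,A_n] = Σ_{s=1}^{n} (-1)^{s+1} A_s·[A₁,…,Â_s,…,A_n]`. -/
def nbrAux {R : Type*} [Ring R] : ℕ → List R → R
  | 0, _ => 0
  | _ + 1, [] => 0
  | _ + 1, [a] => a
  | fuel + 1, l => ∑ s ∈ Finset.range l.length,
      (-1 : R) ^ s * (l.getD s 0 * nbrAux fuel (l.eraseIdx s))

/-- The n-bracket `[A₁,…,A_n]`. -/
def nbr {R : Type*} [Ring R] (l : List R) : R := nbrAux l.length l

/-- The permutation of `Fin (n+1)` sending `0` to `s` and acting by `τ` on the rest. -/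
def extPerm {n : ℕ} (x : Fin (n+1) × Equiv.Perm (Fin n)) : Equiv.Perm (Fin (n+1)) :=
  x.1.cycleRange.symm * Equiv.Perm.decomposeFin.symm (0, x.2)

theorem extPerm_zero {n : ℕ} (s : Fin (n+1)) (τ : Equiv.Perm (Fin n)) :
    extPerm (s, τ) 0 = s := by
  simp [extPerm]

theorem extPerm_succ {n : ℕ} (s : Fin (n+1)) (τ : Equiv.Perm (Fin n)) (k : Fin n) :
    extPerm (s, τ) k.succ = s.succAbove (τ k) := by
  simp [extPerm]

theorem extPerm_sign {n : ℕ} (s : Fin (n+1)) (τ : Equiv.Perm (Fin n)) :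
    Equiv.Perm.sign (extPerm (s, τ)) = (-1) ^ (s : ℕ) * Equiv.Perm.sign τ := by
  simp [extPerm, Equiv.Perm.sign_symm, Fin.sign_cycleRange]

theorem extPerm_bij {n : ℕ} : Function.Bijective (extPerm (n := n)) := by
  rw [Fintype.bijective_iff_injective_and_card]
  constructor
  · rintro ⟨s, τ⟩ ⟨s', τ'⟩ h
    have h0 : s = s' := by
      rw [← extPerm_zero s τ, ← extPerm_zero s' τ', h]
    subst h0
    have h1 : τ = τ' := by
      ext k
      have : s.succAbove (τ k) = s.succAbove (τ' k) := by
        rw [← extPerm_succ, ← extPerm_succ, h]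
      rw [Fin.succAbove_right_injective this]
    rw [h1]
  · simp [Fintype.card_perm, Nat.factorial_succ]

theorem sum_wedge_left {ι : Type*} (S : Finset ι) (f : ι → ℤ × ℤ) (m : ℤ × ℤ) :
    wedge (∑ k ∈ S, f k) m = ∑ k ∈ S, wedge (f k) m := by
  simp only [wedge, Prod.fst_sum, Prod.snd_sum, Finset.sum_mul, Finset.sum_sub_distrib]

theorem sum_pairs_succ {n : ℕ} (g : Fin (n+1) → Fin (n+1) → ℤ) :
    (∑ pr ∈ Finset.univ.filter (fun pr : Fin (n+1) × Fin (n+1) => pr.1 < pr.2), g pr.1 pr.2)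
    = (∑ k : Fin n, g 0 k.succ) +
      ∑ pr ∈ Finset.univ.filter (fun pr : Fin n × Fin n => pr.1 < pr.2),
        g pr.1.succ pr.2.succ := by
  simp only [Finset.sum_filter, Fintype.sum_prod_type, Fin.sum_univ_succ (n := n)]
  simp

theorem nbrAux_ofFn {R : Type*} [Ring R] (n : ℕ) (f : Fin (n+2) → R) :
    nbrAux (n+2) (List.ofFn f) =
      ∑ s : Fin (n+2), (-1 : R) ^ (s : ℕ) *
        (f s * nbrAux (n+1) (List.ofFn fun k => f (s.succAbove k))) := by
  have h1 : nbrAux (n+2) (List.ofFn f) = ∑ s ∈ Finset.range (List.ofFn f).length,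
      (-1 : R) ^ s * ((List.ofFn f).getD s 0 * nbrAux (n+1) ((List.ofFn f).eraseIdx s)) := by
    obtain ⟨a, b, t, h⟩ : ∃ a b t, List.ofFn f = a :: b :: t :=
      ⟨_, _, _, by rw [List.ofFn_succ, List.ofFn_succ]⟩
    rw [h, nbrAux]
    all_goals simp
  rw [h1, List.length_ofFn, Finset.sum_range]
  refine Finset.sum_congr rfl fun s _ => ?_
  have h2 : (List.ofFn f).getD s 0 = f s := by
    rw [List.getD_eq_getElem _ _ (by rw [List.length_ofFn]; exact s.2), List.getElem_ofFn]
  have h3 : (List.ofFn f).eraseIdx s = List.ofFn fun k => f (s.succAbove k) := by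
    apply List.ext_getElem
    · simp [List.length_eraseIdx]
      omega
    · intro k hk hk'
      rw [List.getElem_eraseIdx]
      simp only [List.getElem_ofFn, Fin.succAbove, Fin.lt_def]
      split_ifs with h4 h5 h5
      · rfl
      · exact absurd h4 h5
      · exact absurd h5 h4
      · rfl
  rw [h2, h3]

theorem stmt10_aux {A : Type*} [Ring A] [Algebra ℂ A] (p : ℂ) (hp : p ≠ 0)
    (T : ℤ × ℤ → A) (hT : ∀ m n : ℤ × ℤ, T n * T m = p ^ wedge m n • T (n + m))
    (n : ℕ) : ∀ (i : Fin (n+1) → ℤ × ℤ),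
    nbrAux (n+1) (List.ofFn fun j => T (i j)) =
      (∑ σ : Equiv.Perm (Fin (n+1)), ((Equiv.Perm.sign σ : ℤ) : ℂ) *
          p ^ (∑ pr ∈ Finset.univ.filter (fun pr : Fin (n+1) × Fin (n+1) => pr.1 < pr.2),
                wedge (i (σ pr.2)) (i (σ pr.1)))) • T (∑ j, i j) := by
  induction n with
  | zero =>
    intro i
    simp [nbrAux, Finset.sum_filter, Fintype.sum_prod_type]
  | succ n ih =>
    intro i
    rw [nbrAux_ofFn, ← extPerm_bij.sum_comp, Fintype.sum_prod_type, Finset.sum_smul]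
    refine Finset.sum_congr rfl fun s _ => ?_
    rw [ih (fun k => i (s.succAbove k)), mul_smul_comm, hT, ← Fin.sum_univ_succAbove, smul_smul]
    have h : (-1 : A) ^ (s : ℕ) = algebraMap ℂ A ((-1) ^ (s : ℕ)) := by simp
    rw [h, ← Algebra.smul_def, smul_smul]
    congr 1
    rw [Finset.sum_mul, Finset.mul_sum]
    refine Finset.sum_congr rfl fun τ _ => ?_
    rw [sum_pairs_succ (fun a b => wedge (i (extPerm (s, τ) b)) (i (extPerm (s, τ) a)))]
    simp only [extPerm_zero, extPerm_succ, extPerm_sign]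
    rw [zpow_add₀ hp, sum_wedge_left,
      Equiv.sum_comp τ (fun k => wedge (i (s.succAbove k)) (i s))]
    push_cast
    ring

/-- for a family `T : ℤ² → A` with `T_n T_m = p^{m∧n} • T_{n+m}`, the
n-bracket closes:
`[T_{i₁},…,T_{i_n}] = (Σ_{σ∈S_n} sgn(σ) p^{Σ_{s<k} i_{σ(k)}∧i_{σ(s)}}) • T_{i₁+⋯+i_n}`. -/
theorem stmt10 {A : Type*} [Ring A] [Algebra ℂ A] (p : ℂ) (hp : p ≠ 0)
    (T : ℤ × ℤ → A) (hT : ∀ m n : ℤ × ℤ, T n * T m = p ^ wedge m n • T (n + m))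
    (n : ℕ) (hn : 2 ≤ n) (i : Fin n → ℤ × ℤ) :
    nbr (List.ofFn fun j => T (i j)) =
      (∑ σ : Equiv.Perm (Fin n), ((Equiv.Perm.sign σ : ℤ) : ℂ) *
          p ^ (∑ pr ∈ Finset.univ.filter (fun pr : Fin n × Fin n => pr.1 < pr.2),
                wedge (i (σ pr.2)) (i (σ pr.1)))) • T (∑ j, i j) := by
  obtain ⟨k, rfl⟩ : ∃ k, n = k + 1 := ⟨n - 1, by omega⟩
  rw [nbr, List.length_ofFn]
  exact stmt10_aux p hp T hT k i
end

section
/- Take p = −i (corresponding to q = e^{−πi}, i.e. α = 1/2). Then for all m, n, k ∈ ℤ², the operator Nambu 3-bracket closes as the sine 3-algebra: [T_m,T_n,T_k] = 2i·(sin((π/2)(m∧n − n∧k + k∧m)) + sin((π/2)(m∧n + n∧k − k∧m)) + sin((π/2)(−m∧n + n∧k + k∧m)))·T_{m+n+k}. -/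
/-- The operator Nambu 3-bracket `[A,B,C] = A(BC-CB) + B(CA-AC) + C(AB-BA)`. -/
def nambu {R : Type*} [Ring R] (x y z : R) : R :=
  x * (y * z - z * y) + y * (z * x - x * z) + z * (x * y - y * x)

theorem aux_sin (x : ℤ) : 2 * Complex.I * Complex.sin ((Real.pi : ℂ) / 2 * (x : ℂ))
    = (-Complex.I) ^ (-x) - (-Complex.I) ^ x := by
  have h : -Complex.I = Complex.exp (-((Real.pi : ℂ) / 2 * Complex.I)) := by
    rw [Complex.exp_neg, Complex.exp_pi_div_two_mul_I, Complex.inv_I]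
  rw [h, ← Complex.exp_int_mul, ← Complex.exp_int_mul, Complex.sin]
  have e1 : ((-x : ℤ) : ℂ) * (-((Real.pi : ℂ) / 2 * Complex.I))
      = (Real.pi : ℂ) / 2 * (x : ℂ) * Complex.I := by push_cast; ring
  have e2 : (x : ℂ) * (-((Real.pi : ℂ) / 2 * Complex.I))
      = -((Real.pi : ℂ) / 2 * (x : ℂ)) * Complex.I := by ring
  rw [e1, e2]
  linear_combination (Complex.exp (-((Real.pi : ℂ) / 2 * (x : ℂ)) * Complex.I) -
    Complex.exp ((Real.pi : ℂ) / 2 * (x : ℂ) * Complex.I)) * Complex.I_mul_I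

theorem aux_triple {A : Type*} [Ring A] [Algebra ℂ A]
    (T : ℤ × ℤ → A)
    (hT : ∀ m n : ℤ × ℤ, T n * T m = (-Complex.I) ^ wedge m n • T (n + m))
    (m n k s : ℤ × ℤ) (hs : m + n + k = s) (e : ℤ)
    (he : wedge k n + wedge (n + k) m = e) :
    T m * (T n * T k) = (-Complex.I) ^ e • T s := by
  have h0 : (-Complex.I) ≠ 0 := neg_ne_zero.mpr Complex.I_ne_zero
  rw [hT k n, mul_smul_comm, hT (n + k) m, smul_smul, ← zpow_add₀ h0, he, ← add_assoc, hs]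

/-- for `p = -i` (i.e. `q = e^{-πi}`, `α = 1/2`) the operator Nambu
3-bracket closes as the sine 3-algebra. -/
theorem stmt12 {A : Type*} [Ring A] [Algebra ℂ A]
    (T : ℤ × ℤ → A)
    (hT : ∀ m n : ℤ × ℤ, T n * T m = (-Complex.I) ^ wedge m n • T (n + m))
    (m n k : ℤ × ℤ) :
    nambu (T m) (T n) (T k)
      = (2 * Complex.I *
          (Complex.sin ((Real.pi : ℂ) / 2 * ((wedge m n - wedge n k + wedge k m : ℤ) : ℂ))
            + Complex.sin ((Real.pi : ℂ) / 2 * ((wedge m n + wedge n k - wedge k m : ℤ) : ℂ))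
            + Complex.sin ((Real.pi : ℂ) / 2 *
                ((-wedge m n + wedge n k + wedge k m : ℤ) : ℂ)))) • T (m + n + k) := by
  unfold nambu
  rw [mul_sub, mul_sub, mul_sub]
  have key := aux_triple T hT
  rw [key m n k (m + n + k) (by abel) (-(wedge m n + wedge n k - wedge k m))
      (by simp [wedge]; ring),
    key m k n (m + n + k) (by abel) (-wedge m n + wedge n k + wedge k m)
      (by simp [wedge]; ring),
    key n k m (m + n + k) (by abel) (-(-wedge m n + wedge n k + wedge k m))
      (by simp [wedge]; ring),
    key n m k (m + n + k) (by abel) (wedge m n - wedge n k + wedge k m)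
      (by simp [wedge]; ring),
    key k m n (m + n + k) (by abel) (-(wedge m n - wedge n k + wedge k m))
      (by simp [wedge]; ring),
    key k n m (m + n + k) (by abel) (wedge m n + wedge n k - wedge k m)
      (by simp [wedge]; ring)]
  rw [mul_add, mul_add, aux_sin, aux_sin, aux_sin]
  module
end

section
/- Take p = −i (corresponding to q = e^{−πi}, i.e. α = 1/2). Then the sine 3-algebra is a Filippov 3-algebra: for all a, b, c, d, e ∈ ℤ², the fundamental identity holds for the operator Nambu 3-bracket, [T_a,T_b,[T_c,T_d,T_e]] = [[T_a,T_b,T_c],T_d,T_e] + [T_c,[T_a,T_b,T_d],T_e] + [T_c,T_d,[T_a,T_b,T_e]]. -/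
/-- Commutation sign depending on parities only. -/
def sgnZ (u v : ZMod 2 × ZMod 2) : ℤ := if u.1 * v.2 - u.2 * v.1 = 0 then 1 else -1

/-- Parity class. -/
def par (m : ℤ × ℤ) : ZMod 2 × ZMod 2 := ((m.1 : ZMod 2), (m.2 : ZMod 2))

/-- Coefficient of the Nambu bracket of sign-commuting elements. -/
def coefK (p q r : ℤ) : ℤ := 1 - r + p * q - p + q * r - p * q * r

theorem sgnZ_cases (u v : ZMod 2 × ZMod 2) : sgnZ u v = 1 ∨ sgnZ u v = -1 := by
  unfold sgnZ; split_ifs <;> simp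

theorem negI_zpow (w : ℤ) : (-Complex.I) ^ w
    = (if (w : ZMod 2) = 0 then (1 : ℂ) else -1) * (-Complex.I) ^ (-w) := by
  have h0 : (-Complex.I) ≠ 0 := neg_ne_zero.mpr Complex.I_ne_zero
  have h2 : (-Complex.I) ^ w = (-1 : ℂ) ^ w * (-Complex.I) ^ (-w) := by
    have : (-1 : ℂ) = (-Complex.I) * (-Complex.I) := by simp
    rw [this, mul_zpow, mul_assoc, ← zpow_add₀ h0 w (-w)]
    simp
  rw [h2]
  congr 1
  have hz := ZMod.intCast_zmod_eq_zero_iff_dvd w 2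
  split_ifs with h
  · exact Even.neg_one_zpow (even_iff_two_dvd.mpr (by exact_mod_cast hz.mp h))
  · exact Odd.neg_one_zpow (Int.not_even_iff_odd.mp
      (fun h' => h (hz.mpr (by exact_mod_cast even_iff_two_dvd.mp h'))))

theorem T_comm {A : Type*} [Ring A] [Algebra ℂ A] (T : ℤ × ℤ → A)
    (hT : ∀ m n : ℤ × ℤ, T n * T m = (-Complex.I) ^ wedge m n • T (n + m))
    (m n : ℤ × ℤ) : T m * T n = sgnZ (par m) (par n) • (T n * T m) := by
  rw [hT n m, hT m n, add_comm n m, negI_zpow]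
  have hw : wedge n m = - wedge m n := by unfold wedge; ring
  have hc : ((wedge n m : ℤ) : ZMod 2) = 0 ↔
      (par m).1 * (par n).2 - (par m).2 * (par n).1 = 0 := by
    rw [hw, Int.cast_neg, neg_eq_zero]; simp [wedge, par]
  rw [hw] at *
  unfold sgnZ
  by_cases h : (par m).1 * (par n).2 - (par m).2 * (par n).1 = 0
  · rw [if_pos h, if_pos (hc.mpr h)]; simp
  · rw [if_neg h, if_neg (fun h' => h (hc.mp h'))]; simp

theorem nambu_eq {A : Type*} [Ring A] (x y z : A) (p q r : ℤ)
    (hp : y * x = p • (x * y)) (hq : z * x = q • (x * z)) (hr : z * y = r • (y * z)) :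
    nambu x y z = coefK p q r • (x * y * z) := by
  have e1 : x * (z * y) = r • (x * y * z) := by rw [hr, mul_smul_comm, mul_assoc]
  have e2 : y * (z * x) = (p * q) • (x * y * z) := by
    rw [hq, mul_smul_comm, ← mul_assoc, hp, smul_mul_assoc, smul_smul, mul_comm q p]
  have e3 : y * (x * z) = p • (x * y * z) := by rw [← mul_assoc, hp, smul_mul_assoc]
  have e4 : z * (x * y) = (q * r) • (x * y * z) := by
    rw [← mul_assoc, hq, smul_mul_assoc, mul_assoc x z y, e1, smul_smul]
  have e5 : z * (y * x) = (p * q * r) • (x * y * z) := by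
    rw [hp, mul_smul_comm, e4, smul_smul, ← mul_assoc p q r]
  unfold nambu coefK
  simp only [mul_sub]
  rw [e1, e2, e3, e4, e5, ← mul_assoc]
  simp only [sub_smul, add_smul, one_smul]
  abel

theorem comm3 {A : Type*} [Ring A] (x y z w : A) (p q r : ℤ)
    (hp : w * x = p • (x * w)) (hq : w * y = q • (y * w)) (hr : w * z = r • (z * w)) :
    w * (x * y * z) = (p * q * r) • (x * y * z * w) := by
  rw [← mul_assoc, ← mul_assoc, hp, smul_mul_assoc, mul_assoc x w y, hq, mul_smul_comm,
    smul_mul_assoc, smul_mul_assoc, ← mul_assoc, mul_assoc (x * y) w z, hr, mul_smul_comm,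
    smul_smul, smul_smul, ← mul_assoc]

theorem comm3' {A : Type*} [Ring A] (x y z w : A) (p q r : ℤ)
    (hp : x * w = p • (w * x)) (hq : y * w = q • (w * y)) (hr : z * w = r • (w * z)) :
    (x * y * z) * w = (p * q * r) • (w * (x * y * z)) := by
  rw [mul_assoc, hr, mul_smul_comm, ← mul_assoc, mul_assoc x y w, hq, mul_smul_comm,
    smul_mul_assoc, ← mul_assoc, hp, smul_mul_assoc, smul_mul_assoc, smul_smul, smul_smul]
  simp only [mul_assoc]
  congr 1; ring

theorem nambu_smul₁ {A : Type*} [Ring A] (x y z : A) (k : ℤ) :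
    nambu (k • x) y z = k • nambu x y z := by
  simp only [nambu, mul_smul_comm, smul_mul_assoc, ← smul_sub, ← smul_add]

theorem nambu_smul₂ {A : Type*} [Ring A] (x y z : A) (k : ℤ) :
    nambu x (k • y) z = k • nambu x y z := by
  simp only [nambu, mul_smul_comm, smul_mul_assoc, ← smul_sub, ← smul_add]

theorem nambu_smul₃ {A : Type*} [Ring A] (x y z : A) (k : ℤ) :
    nambu x y (k • z) = k • nambu x y z := by
  simp only [nambu, mul_smul_comm, smul_mul_assoc, ← smul_sub, ← smul_add]

set_option maxRecDepth 100000 in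
theorem coef_identity : ∀ a b c d e : ZMod 2 × ZMod 2,
    coefK (sgnZ d c) (sgnZ e c) (sgnZ e d) *
      coefK (sgnZ b a) (sgnZ c a * sgnZ d a * sgnZ e a) (sgnZ c b * sgnZ d b * sgnZ e b)
    = coefK (sgnZ b a) (sgnZ c a) (sgnZ c b) *
        coefK (sgnZ d a * sgnZ d b * sgnZ d c) (sgnZ e a * sgnZ e b * sgnZ e c) (sgnZ e d)
      + coefK (sgnZ b a) (sgnZ d a) (sgnZ d b) *
        (coefK (sgnZ a c * sgnZ b c * sgnZ d c) (sgnZ e c) (sgnZ e a * sgnZ e b * sgnZ e d)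
          * (sgnZ c a * sgnZ c b))
      + coefK (sgnZ b a) (sgnZ e a) (sgnZ e b) *
        (coefK (sgnZ d c) (sgnZ a c * sgnZ b c * sgnZ e c) (sgnZ a d * sgnZ b d * sgnZ e d)
          * (sgnZ d a * sgnZ d b * (sgnZ c a * sgnZ c b))) := by
  decide +kernel

/-- for `p = -i` (i.e. `q = e^{-πi}`, `α = 1/2`) the sine 3-algebra is a
Filippov 3-algebra: the fundamental identity holds for the operator Nambu 3-bracket. -/
theorem stmt13 {A : Type*} [Ring A] [Algebra ℂ A]
    (T : ℤ × ℤ → A)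
    (hT : ∀ m n : ℤ × ℤ, T n * T m = (-Complex.I) ^ wedge m n • T (n + m))
    (a b c d e : ℤ × ℤ) :
    nambu (T a) (T b) (nambu (T c) (T d) (T e))
      = nambu (nambu (T a) (T b) (T c)) (T d) (T e)
        + nambu (T c) (nambu (T a) (T b) (T d)) (T e)
        + nambu (T c) (T d) (nambu (T a) (T b) (T e)) := by
  have C := T_comm T hT
  have M : ∀ w x y : ℤ × ℤ, T w * (T x * T y)
      = (sgnZ (par w) (par x) * sgnZ (par w) (par y)) • (T x * T y * T w) := by
    intro w x y
    rw [← mul_assoc, C w x, smul_mul_assoc, mul_assoc, C w y, mul_smul_comm, smul_smul,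
      ← mul_assoc]
  have N : ∀ x y z, nambu (T x) (T y) (T z) = _ := fun x y z =>
    nambu_eq _ _ _ _ _ _ (C y x) (C z x) (C z y)
  have m1 : T c * (T a * T b * T d) * T e = (sgnZ (par c) (par a) * sgnZ (par c) (par b)) •
      (T a * T b * T c * T d * T e) := by
    rw [← mul_assoc (T c), M, smul_mul_assoc, smul_mul_assoc]
  have m2 : T c * T d * (T a * T b * T e) = (sgnZ (par d) (par a) * sgnZ (par d) (par b) *
      (sgnZ (par c) (par a) * sgnZ (par c) (par b))) •
      (T a * T b * T c * T d * T e) := by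
    rw [← mul_assoc (T c * T d), mul_assoc (T c), M d, mul_smul_comm, ← mul_assoc (T c), M c,
      smul_mul_assoc, smul_mul_assoc, smul_mul_assoc, smul_smul]
  rw [N c d e, N a b c, N a b d, N a b e, nambu_smul₁, nambu_smul₂, nambu_smul₃, nambu_smul₃]
  rw [nambu_eq (T a) (T b) (T c * T d * T e) _ _ _ (C b a)
      (comm3' _ _ _ _ _ _ _ (C c a) (C d a) (C e a))
      (comm3' _ _ _ _ _ _ _ (C c b) (C d b) (C e b)),
    nambu_eq (T a * T b * T c) (T d) (T e) _ _ _
      (comm3 _ _ _ _ _ _ _ (C d a) (C d b) (C d c))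
      (comm3 _ _ _ _ _ _ _ (C e a) (C e b) (C e c)) (C e d),
    nambu_eq (T c) (T a * T b * T d) (T e) _ _ _
      (comm3' _ _ _ _ _ _ _ (C a c) (C b c) (C d c)) (C e c)
      (comm3 _ _ _ _ _ _ _ (C e a) (C e b) (C e d)),
    nambu_eq (T c) (T d) (T a * T b * T e) _ _ _ (C d c)
      (comm3' _ _ _ _ _ _ _ (C a c) (C b c) (C e c))
      (comm3' _ _ _ _ _ _ _ (C a d) (C b d) (C e d)), m1, m2]
  have m0 : T a * T b * (T c * T d * T e) = T a * T b * T c * T d * T e := by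
    simp only [mul_assoc]
  rw [m0]
  simp only [smul_smul, ← add_smul]
  congr 1
  exact coef_identity _ _ _ _ _
end

section
/- Let q = p² and assume q² ≠ 1, and set T̄_m = (q − q^{-1})^{-1}·T_m. Then for all m, n ∈ ℤ², the q-deformed SDiff(T²) algebra relation holds: p^{3(m∧n)}·T̄_m·T̄_n − p^{3(n∧m)}·T̄_n·T̄_m = [m∧n]·T̄_{m+n}, where [x] = (q^x − q^{-x})/(q − q^{-1}). -/
/-- with `q = p²`, `q² ≠ 1` and `T̄_m = (q - q⁻¹)⁻¹ • T_m`, the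
q-deformed SDiff(T²) algebra relation
`p^{3(m∧n)} T̄_m T̄_n - p^{3(n∧m)} T̄_n T̄_m = [m∧n] T̄_{m+n}` holds. -/
theorem stmt16 {A : Type*} [Ring A] [Algebra ℂ A] (p : ℂ) (hp : p ≠ 0)
    (hq2 : (p ^ 2) ^ 2 ≠ 1)
    (T : ℤ × ℤ → A) (hT : ∀ m n : ℤ × ℤ, T n * T m = p ^ wedge m n • T (n + m))
    (Tb : ℤ × ℤ → A) (hTb : ∀ m : ℤ × ℤ, Tb m = (p ^ 2 - (p ^ 2)⁻¹)⁻¹ • T m)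
    (m n : ℤ × ℤ) :
    p ^ (3 * wedge m n) • (Tb m * Tb n) - p ^ (3 * wedge n m) • (Tb n * Tb m)
      = qnum (p ^ 2) (wedge m n) • Tb (m + n) := by
  have hw : wedge n m = - wedge m n := by unfold wedge; ring
  have e1 : p ^ (3 * wedge m n) * p ^ (-wedge m n) = (p ^ 2) ^ wedge m n := by
    rw [← zpow_add₀ hp, ← zpow_natCast p 2, ← zpow_mul]
    congr 1
    push_cast
    ring
  have e2 : p ^ (3 * -wedge m n) * p ^ (wedge m n) = (p ^ 2) ^ (-wedge m n) := by
    rw [← zpow_add₀ hp, ← zpow_natCast p 2, ← zpow_mul]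
    congr 1
    push_cast
    ring
  rw [hTb, hTb, hTb]
  simp only [smul_mul_smul_comm]
  rw [hT n m, hT m n, add_comm n m, hw]
  simp only [smul_smul]
  rw [← sub_smul]
  congr 1
  unfold qnum
  rw [← e1, ← e2]
  ring
end

section
/- Let q = p² with q² ≠ 1, let c be a scalar with c² = (q − q^{-1})^{-1}, and set T̄_m = c·T_m. Define the q-3-bracket ⟦T̄_m,T̄_n,T̄_k⟧ := p^{3·m∧(n+k)}·T̄_m·(p^{3(n∧k)}T̄_nT̄_k − p^{3(k∧n)}T̄_kT̄_n) + p^{3·n∧(k+m)}·T̄_n·(p^{3(k∧m)}T̄_kT̄_m − p^{3(m∧k)}T̄_mT̄_k) + p^{3·k∧(m+n)}·T̄_k·(p^{3(m∧n)}T̄_mT̄_n − p^{3(n∧m)}T̄_nT̄_m). Then for all m, n, k ∈ ℤ²: ⟦T̄_m,T̄_n,T̄_k⟧ = ([m∧n − n∧k + k∧m] + [m∧n + n∧k − k∧m] + [−m∧n + n∧k + k∧m])·T̄_{m+n+k}. -/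
theorem stmt17_aux {A : Type*} [Ring A] [Algebra ℂ A] (p : ℂ) (hp : p ≠ 0) (c : ℂ)
    (T : ℤ × ℤ → A) (hT : ∀ m n : ℤ × ℤ, T n * T m = p ^ wedge m n • T (n + m))
    (x y z w s : ℤ × ℤ) (hw : w = y + z) (hs : x + (y + z) = s) (e : ℤ)
    (he : e = wedge x y + wedge y z - wedge z x) :
    p ^ (3 * wedge x w) • ((c • T x) * (p ^ (3 * wedge y z) • ((c • T y) * (c • T z))))
      = (c ^ 3 * (p ^ 2) ^ e) • T s := by
  subst hw
  simp only [smul_mul_assoc, mul_smul_comm, hT, smul_smul, hs]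
  congr 1
  have h : (p ^ 2) ^ e = p ^ (3 * wedge x (y + z)) * p ^ (3 * wedge y z)
      * p ^ (wedge z y) * p ^ (wedge (y + z) x) := by
    rw [← zpow_natCast p 2, ← zpow_mul, ← zpow_add₀ hp, ← zpow_add₀ hp, ← zpow_add₀ hp, he]
    congr 1
    simp only [wedge, Prod.fst_add, Prod.snd_add]
    push_cast
    ring
  rw [h]
  ring

/-- with `q = p²`, `q² ≠ 1`, `c² = (q - q⁻¹)⁻¹` and `T̄_m = c • T_m`,
the q-3-bracket of the rescaled generators gives the q-deformed SDiff(T²) 3-algebra: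
`⟦T̄_m,T̄_n,T̄_k⟧ = ([m∧n - n∧k + k∧m] + [m∧n + n∧k - k∧m] + [-m∧n + n∧k + k∧m])
  • T̄_{m+n+k}`. -/
theorem stmt17 {A : Type*} [Ring A] [Algebra ℂ A] (p : ℂ) (hp : p ≠ 0)
    (hq2 : (p ^ 2) ^ 2 ≠ 1) (c : ℂ) (hc : c ^ 2 = (p ^ 2 - (p ^ 2)⁻¹)⁻¹)
    (T : ℤ × ℤ → A) (hT : ∀ m n : ℤ × ℤ, T n * T m = p ^ wedge m n • T (n + m))
    (Tb : ℤ × ℤ → A) (hTb : ∀ m : ℤ × ℤ, Tb m = c • T m)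
    (m n k : ℤ × ℤ) :
    p ^ (3 * wedge m (n + k)) •
        (Tb m * (p ^ (3 * wedge n k) • (Tb n * Tb k) - p ^ (3 * wedge k n) • (Tb k * Tb n)))
      + p ^ (3 * wedge n (k + m)) •
        (Tb n * (p ^ (3 * wedge k m) • (Tb k * Tb m) - p ^ (3 * wedge m k) • (Tb m * Tb k)))
      + p ^ (3 * wedge k (m + n)) •
        (Tb k * (p ^ (3 * wedge m n) • (Tb m * Tb n) - p ^ (3 * wedge n m) • (Tb n * Tb m)))
      = (qnum (p ^ 2) (wedge m n - wedge n k + wedge k m)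
          + qnum (p ^ 2) (wedge m n + wedge n k - wedge k m)
          + qnum (p ^ 2) (-wedge m n + wedge n k + wedge k m)) • Tb (m + n + k) := by
  simp only [mul_sub, smul_sub, hTb]
  rw [stmt17_aux p hp c T hT m n k (n + k) (m + n + k) (by abel) (by abel)
      (-(-wedge m n - wedge n k + wedge k m)) (by ring),
    stmt17_aux p hp c T hT m k n (n + k) (m + n + k) (by abel) (by abel)
      (-(-wedge m n + wedge n k + wedge k m)) (by simp only [wedge]; ring),
    stmt17_aux p hp c T hT n k m (k + m) (m + n + k) (by abel) (by abel)
      (-wedge m n + wedge n k + wedge k m) (by simp only [wedge]; ring),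
    stmt17_aux p hp c T hT n m k (k + m) (m + n + k) (by abel) (by abel)
      (-(wedge m n - wedge n k + wedge k m)) (by simp only [wedge]; ring),
    stmt17_aux p hp c T hT k m n (m + n) (m + n + k) (by abel) (by abel)
      (wedge m n - wedge n k + wedge k m) (by simp only [wedge]; ring),
    stmt17_aux p hp c T hT k n m (m + n) (m + n + k) (by abel) (by abel)
      (-(wedge m n + wedge n k - wedge k m)) (by simp only [wedge]; ring)]
  rw [show -(-wedge m n - wedge n k + wedge k m) = wedge m n + wedge n k - wedge k m by ring]
  simp only [← sub_smul, ← add_smul, smul_smul, qnum, div_eq_mul_inv, ← hc]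
  congr 1
  ring
end

section
/- Let q = p² with q² ≠ 1, let n ≥ 2, let c be a scalar with c^{n−1} = (q − q^{-1})^{-1}, and set T̄_m = c·T_m. Define the q-n-bracket recursively by ⟦T̄_{i₁}⟧ = T̄_{i₁} and, for 2 ≤ m ≤ n, ⟦T̄_{i₁},…,T̄_{i_m}⟧ = Σ_{s=1}^{m}(−1)^{s+1}·p^{3·i_s∧(Σ_{t≠s} i_t)}·T̄_{i_s}·⟦T̄_{i₁},…,T̂̄_{i_s},…,T̄_{i_m}⟧ (hat = omission). Then for all i₁,…,i_n ∈ ℤ²: ⟦T̄_{i₁},…,T̄_{i_n}⟧ = (q − q^{-1})^{-1}·(Σ_{σ∈S_n} sgn(σ)·q^{Σ_{1≤k<s≤n} i_{σ(k)}∧i_{σ(s)}})·T̄_{i₁+⋯+i_n}, which is the q-deformed SDiff(T²) n-algebra. -/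
/-- The recursively defined q-n-bracket of the rescaled generators (fuel version):
`⟦T̄_{i₁}⟧ = T̄_{i₁}` and
`⟦T̄_{i₁},…,T̄_{i_m}⟧ = Σ_s (-1)^{s+1} p^{3·i_s∧(Σ_{t≠s} i_t)} T̄_{i_s}·⟦…omit s…⟧`. -/
noncomputable def qTbrAux {A : Type*} [Ring A] [Algebra ℂ A] (p : ℂ) (Tb : ℤ × ℤ → A) :
    ℕ → List (ℤ × ℤ) → A
  | 0, _ => 0
  | _ + 1, [] => 0
  | _ + 1, [i] => Tb i
  | fuel + 1, l => ∑ s ∈ Finset.range l.length,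
      ((-1 : ℂ) ^ s * p ^ (3 * wedge (l.getD s 0) (l.sum - l.getD s 0))) •
        (Tb (l.getD s 0) * qTbrAux p Tb fuel (l.eraseIdx s))

/-- The q-n-bracket `⟦T̄_{i₁},…,T̄_{i_n}⟧`. -/
noncomputable def qTbr {A : Type*} [Ring A] [Algebra ℂ A] (p : ℂ) (Tb : ℤ × ℤ → A)
    (l : List (ℤ × ℤ)) : A := qTbrAux p Tb l.length l

theorem wedge_sum_right {ι : Type*} (s : Finset ι) (a : ℤ × ℤ) (f : ι → ℤ × ℤ) :
    ∑ j ∈ s, wedge a (f j) = wedge a (∑ j ∈ s, f j) := by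
  simp only [wedge, Finset.sum_sub_distrib, Finset.mul_sum, Prod.fst_sum, Prod.snd_sum]

/-- exponent -/
def expo {n : ℕ} (j : Fin n → ℤ × ℤ) : ℤ :=
  ∑ pr ∈ Finset.univ.filter (fun pr : Fin n × Fin n => pr.1 < pr.2), wedge (j pr.1) (j pr.2)

/-- The alternating sum. -/
noncomputable def altS (q : ℂ) {n : ℕ} (i : Fin n → ℤ × ℤ) : ℂ :=
  ∑ σ : Equiv.Perm (Fin n), ((Equiv.Perm.sign σ : ℤ) : ℂ) * q ^ expo (i ∘ σ)

theorem expo_succ {n : ℕ} (j : Fin (n + 1) → ℤ × ℤ) :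
    expo j = wedge (j 0) (∑ k : Fin n, j k.succ) + expo (j ∘ Fin.succ) := by
  unfold expo
  rw [← wedge_sum_right]
  simp only [Finset.sum_filter, Fintype.sum_prod_type, Fin.sum_univ_succ (n := n)]
  simp [Fin.succ_pos]

theorem altS_perm (q : ℂ) {n : ℕ} (i : Fin n → ℤ × ℤ) (ρ : Equiv.Perm (Fin n)) :
    altS q (i ∘ ρ) = ((Equiv.Perm.sign ρ : ℤ) : ℂ) * altS q i := by
  unfold altS
  rw [← Equiv.sum_comp (Equiv.mulLeft ρ) (fun σ => ((Equiv.Perm.sign σ : ℤ) : ℂ) * q ^ expo (i ∘ σ)),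
    Finset.mul_sum]
  refine Finset.sum_congr rfl fun σ _ => ?_
  rw [← mul_assoc]
  congr 1
  simp only [Equiv.coe_mulLeft, Equiv.Perm.sign_mul, Units.val_mul, Int.cast_mul, ← mul_assoc]
  rcases Int.units_eq_one_or (Equiv.Perm.sign ρ) with h | h <;> simp [h]

theorem altS_swap (q : ℂ) {n : ℕ} (i : Fin (n + 1) → ℤ × ℤ) (s : Fin (n + 1)) :
    ((Equiv.Perm.sign (Equiv.swap 0 s) : ℤ) : ℂ) * altS q (i ∘ Equiv.swap 0 s ∘ Fin.succ)
      = (-1) ^ (s : ℕ) * altS q (i ∘ s.succAbove) := by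
  cases s using Fin.cases with
  | zero => simp [Function.comp_def]
  | succ t =>
    have : i ∘ Equiv.swap 0 t.succ ∘ Fin.succ = (i ∘ t.succ.succAbove) ∘ t.cycleRange := by
      funext x
      simp [Fin.succAbove_cycleRange]
    rw [this, altS_perm, Equiv.Perm.sign_swap (Fin.succ_ne_zero t).symm, Fin.sign_cycleRange]
    simp [pow_succ]

theorem altS_succ (q : ℂ) (hq : q ≠ 0) {n : ℕ} (i : Fin (n + 1) → ℤ × ℤ) :
    altS q i = ∑ s : Fin (n + 1), (-1) ^ (s : ℕ) * q ^ wedge (i s) (∑ k, i k - i s) *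
      altS q (i ∘ s.succAbove) := by
  have h1 : altS q i = ∑ s : Fin (n + 1), q ^ wedge (i s) (∑ k, i k - i s) *
      (((Equiv.Perm.sign (Equiv.swap 0 s) : ℤ) : ℂ) * altS q (i ∘ Equiv.swap 0 s ∘ Fin.succ)) := by
    conv_lhs => unfold altS
    rw [← Equiv.sum_comp Equiv.Perm.decomposeFin.symm, Fintype.sum_prod_type]
    refine Finset.sum_congr rfl fun s _ => ?_
    unfold altS
    rw [Finset.mul_sum, Finset.mul_sum]
    refine Finset.sum_congr rfl fun τ _ => ?_
    set e := Equiv.Perm.decomposeFin.symm (s, τ) with he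
    have h0 : e 0 = s := by simp [he]
    have hsum : ∑ k : Fin n, (i ∘ e) k.succ = ∑ k, i k - i s := by
      rw [← Equiv.sum_comp e i, Fin.sum_univ_succ, h0]; simp
    have hc : (i ∘ e) ∘ Fin.succ = (i ∘ Equiv.swap 0 s ∘ Fin.succ) ∘ τ := by
      funext x; simp [he]
    have hs : Equiv.Perm.sign e = Equiv.Perm.sign (Equiv.swap 0 s) * Equiv.Perm.sign τ := by
      rw [he, Equiv.Perm.decomposeFin.symm_sign]
      by_cases h : s = 0
      · simp [h]
      · simp [h, Equiv.Perm.sign_swap (Ne.symm h)]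
    rw [expo_succ, hsum, hc, hs, Function.comp_apply, h0, zpow_add₀ hq]
    push_cast
    ring
  rw [h1]
  refine Finset.sum_congr rfl fun s _ => ?_
  rw [altS_swap]; ring

theorem eraseIdx_ofFn_aux {α : Type*} {n : ℕ} (i : Fin (n + 1) → α) (s : Fin (n + 1)) :
    (List.ofFn i).eraseIdx s = List.ofFn (i ∘ s.succAbove) := by
  apply List.ext_getElem
  · simp [List.length_eraseIdx]
    omega
  · intro k h1 h2
    simp only [List.getElem_eraseIdx, List.getElem_ofFn, Function.comp_apply, Fin.succAbove,
      Fin.lt_def]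
    split_ifs <;> simp_all

theorem qTbrAux_eq {A : Type*} [Ring A] [Algebra ℂ A] (p : ℂ) (hp : p ≠ 0) (c : ℂ)
    (T : ℤ × ℤ → A) (hT : ∀ m k : ℤ × ℤ, T k * T m = p ^ wedge m k • T (k + m))
    (Tb : ℤ × ℤ → A) (hTb : ∀ m : ℤ × ℤ, Tb m = c • T m) (n : ℕ) :
    ∀ i : Fin (n + 1) → ℤ × ℤ, qTbrAux p Tb (n + 1) (List.ofFn i)
      = (c ^ n * altS (p ^ 2) i) • Tb (∑ j, i j) := by
  induction n with
  | zero =>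
    intro i
    simp [qTbrAux, altS, expo, Finset.sum_filter, Fintype.sum_prod_type]
  | succ n ih =>
    intro i
    have hun : qTbrAux p Tb (n + 1 + 1) (List.ofFn i) =
        ∑ s ∈ Finset.range (List.ofFn i).length,
          ((-1 : ℂ) ^ s * p ^ (3 * wedge ((List.ofFn i).getD s 0)
            ((List.ofFn i).sum - (List.ofFn i).getD s 0))) •
          (Tb ((List.ofFn i).getD s 0) * qTbrAux p Tb (n + 1) ((List.ofFn i).eraseIdx s)) := by
      rw [qTbrAux]
      · simp
      · intro x h
        have := congrArg List.length h
        simp at this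
    rw [hun, List.length_ofFn, Finset.sum_range, altS_succ _ (pow_ne_zero 2 hp), Finset.mul_sum,
      Finset.sum_smul]
    refine Finset.sum_congr rfl fun s _ => ?_
    have hg : (List.ofFn i).getD (s : ℕ) 0 = i s := by
      rw [List.getD_eq_getElem _ _ (by simp only [List.length_ofFn]; exact s.isLt), List.getElem_ofFn]
    have hR : ∑ j, (i ∘ s.succAbove) j = ∑ k, i k - i s := by
      rw [Fin.sum_univ_succAbove i s]; simp
    rw [hg, eraseIdx_ofFn_aux, ih, List.sum_ofFn, hR]
    set R := ∑ k, i k - i s with hRd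
    have hR2 : ∑ k, i k = i s + R := by simp [hRd]
    rw [hR2, hTb, hTb, hTb]
    simp only [mul_smul_comm, smul_mul_assoc, hT, smul_smul]
    congr 1
    have hw : (p ^ 2) ^ wedge (i s) R = p ^ (3 * wedge (i s) R) * p ^ wedge R (i s) := by
      rw [← zpow_natCast, ← zpow_mul, ← zpow_add₀ hp]
      congr 1
      simp only [wedge]; push_cast; ring
    rw [hw]; ring

/-- with `q = p²`, `q² ≠ 1`, `c^{n-1} = (q - q⁻¹)⁻¹` and `T̄_m = c • T_m`,
the q-n-bracket closes as the q-deformed SDiff(T²) n-algebra: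
`⟦T̄_{i₁},…,T̄_{i_n}⟧ = (q-q⁻¹)⁻¹ (Σ_{σ∈S_n} sgn(σ) q^{Σ_{k<s} i_{σ(k)}∧i_{σ(s)}})
  • T̄_{i₁+⋯+i_n}`. -/
theorem stmt18 {A : Type*} [Ring A] [Algebra ℂ A] (p : ℂ) (hp : p ≠ 0)
    (hq2 : (p ^ 2) ^ 2 ≠ 1) (n : ℕ) (hn : 2 ≤ n)
    (c : ℂ) (hc : c ^ (n - 1) = (p ^ 2 - (p ^ 2)⁻¹)⁻¹)
    (T : ℤ × ℤ → A) (hT : ∀ m k : ℤ × ℤ, T k * T m = p ^ wedge m k • T (k + m))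
    (Tb : ℤ × ℤ → A) (hTb : ∀ m : ℤ × ℤ, Tb m = c • T m)
    (i : Fin n → ℤ × ℤ) :
    qTbr p Tb (List.ofFn i)
      = ((p ^ 2 - (p ^ 2)⁻¹)⁻¹ *
          ∑ σ : Equiv.Perm (Fin n), ((Equiv.Perm.sign σ : ℤ) : ℂ) *
            (p ^ 2) ^ (∑ pr ∈ Finset.univ.filter (fun pr : Fin n × Fin n => pr.1 < pr.2),
              wedge (i (σ pr.1)) (i (σ pr.2)))) • Tb (∑ j, i j) := by
  obtain ⟨m, rfl⟩ : ∃ m, n = m + 1 := ⟨n - 1, by omega⟩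
  have h := qTbrAux_eq p hp c T hT Tb hTb m i
  rw [Nat.add_sub_cancel] at hc
  rw [hc] at h
  unfold qTbr
  rw [List.length_ofFn, h]
  rfl
end
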